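/- arXiv:2308.05757 — 5 statements merged into one kernel-verified Lean document; each statement's English description precedes it below -/
import Mathlib

section
/- Let S be a nonempty finite set of jobs with nonnegative processing times t : S → ℝ, and let m ≥ 1 be a number of machines. Then there exists an assignment f : S → Fin m such that for every machine j, the total load Σ_{i ∈ S, f(i) = j} t(i) is at most (Σ_{i ∈ S} t(i))/m + max_{i ∈ S} t(i). -/
/-!
Choose an assignment minimising the sum of the squared loads. Moving a job of positive time `c` from
a machine with load `x` to one with load `y` changes that sum by `2 * c * (c + y - x)`, so at a
minimum `x ≤ y + c`. Since some machine has load at most the average, every machine carrying a job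
of positive time has load at most the average plus the maximum; the remaining loads are nonpositive,
and the bound is nonnegative as soon as the total time is.
-/

theorem dotProduct_self_add_single_sub_single {ι R : Type*} [Fintype ι] [DecidableEq ι]
    [CommRing R] (x : ι → R) {j k : ι} (hjk : j ≠ k) (c : R) :
    (x + Pi.single k c - Pi.single j c) ⬝ᵥ (x + Pi.single k c - Pi.single j c) =
      x ⬝ᵥ x + 2 * c * (c + x k - x j) := by
  simp only [sub_dotProduct, add_dotProduct, dotProduct_sub, dotProduct_add, dotProduct_single,
    single_dotProduct, Pi.add_apply, Pi.sub_apply, Pi.single_eq_same, Pi.single_eq_of_ne hjk,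
    Pi.single_eq_of_ne hjk.symm]
  ring

section Load

variable {α ι M : Type*} [DecidableEq ι] [AddCommMonoid M]

/-- The load vector of an assignment `f` of the jobs in `S`, with processing times `t`, to machines
indexed by `ι`. The assignment is total on the ambient type `α` of jobs; its values outside `S` do
not affect the loads. -/
def machineLoad (S : Finset α) (t : α → M) (f : α → ι) (j : ι) : M :=
  ∑ i ∈ S with f i = j, t i

theorem machineLoad_eq_sum_single (S : Finset α) (t : α → M) (f : α → ι) :
    machineLoad S t f = ∑ i ∈ S, Pi.single (f i) (t i) := by
  ext j
  simp only [machineLoad, Finset.sum_filter, Finset.sum_apply, Pi.single_apply, eq_comm]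

theorem finite_range_machineLoad [Finite ι] (S : Finset α) (t : α → M) :
    (Set.range (machineLoad S t : (α → ι) → ι → M)).Finite := by
  refine (Set.finite_range fun g : S → ι => ∑ i, Pi.single (g i) (t i)).subset ?_
  rintro _ ⟨f, rfl⟩
  refine ⟨fun i => f i, ?_⟩
  rw [machineLoad_eq_sum_single]
  exact Finset.sum_coe_sort S fun i => (Pi.single (f i) (t i) : ι → M)

end Load

theorem machineLoad_update {α ι G : Type*} [DecidableEq α] [DecidableEq ι] [AddCommGroup G]
    {S : Finset α} {i : α} (hi : i ∈ S) (t : α → G) (f : α → ι) (k : ι) :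
    machineLoad S t (Function.update f i k) =
      machineLoad S t f + Pi.single k (t i) - Pi.single (f i) (t i) := by
  have unchanged : ∑ a ∈ S.erase i, Pi.single (Function.update f i k a) (t a) =
      ∑ a ∈ S.erase i, (Pi.single (f a) (t a) : ι → G) :=
    Finset.sum_congr rfl fun a ha => by rw [Function.update_of_ne (Finset.ne_of_mem_erase ha)]
  rw [machineLoad_eq_sum_single, machineLoad_eq_sum_single, ← Finset.add_sum_erase S _ hi,
    ← Finset.add_sum_erase S (fun a => (Pi.single (f a) (t a) : ι → G)) hi, unchanged,
    Function.update_self]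
  abel

section Minimizer

variable {α ι K : Type*} [Fintype ι] [DecidableEq ι] [LinearOrder K]

theorem exists_machineLoad_dotProduct_self_le [Nonempty ι] [Mul K] [AddCommMonoid K]
    (S : Finset α) (t : α → K) :
    ∃ f : α → ι, ∀ g : α → ι,
      machineLoad S t f ⬝ᵥ machineLoad S t f ≤ machineLoad S t g ⬝ᵥ machineLoad S t g := by
  obtain ⟨_, ⟨f, rfl⟩, hf⟩ := Set.exists_min_image _ (fun x : ι → K => x ⬝ᵥ x)
    (finite_range_machineLoad S t) (Set.range_nonempty _)
  exact ⟨f, fun g => hf _ (Set.mem_range_self g)⟩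

theorem machineLoad_le_add_of_dotProduct_self_le [CommRing K] [IsStrictOrderedRing K]
    {S : Finset α} {t : α → K} {f : α → ι}
    (hf : ∀ g : α → ι,
      machineLoad S t f ⬝ᵥ machineLoad S t f ≤ machineLoad S t g ⬝ᵥ machineLoad S t g)
    {i : α} (hi : i ∈ S) (hti : 0 < t i) (k : ι) :
    machineLoad S t f (f i) ≤ machineLoad S t f k + t i := by
  classical
  obtain rfl | hk := eq_or_ne (f i) k
  · exact le_add_of_nonneg_right hti.le
  have hmove := hf (Function.update f i k)
  rw [machineLoad_update hi, dotProduct_self_add_single_sub_single _ hk] at hmove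
  have hgain : 0 ≤ t i + machineLoad S t f k - machineLoad S t f (f i) :=
    nonneg_of_mul_nonneg_right ((le_add_iff_nonneg_right _).mp hmove) (by positivity)
  linarith

end Minimizer

section Average

variable {α ι K : Type*} [Fintype ι] [Nonempty ι] [DecidableEq ι]
  [Field K] [LinearOrder K] [IsStrictOrderedRing K]

theorem exists_machineLoad_le_average (S : Finset α) (t : α → K) (f : α → ι) :
    ∃ k, machineLoad S t f k ≤ (∑ i ∈ S, t i) / Fintype.card ι := by
  have htotal : ∑ i ∈ S, t i ≤
      (Finset.univ : Finset ι).card • ((∑ i ∈ S, t i) / (Fintype.card ι : K)) := by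
    rw [Finset.card_univ, nsmul_eq_mul, mul_div_cancel₀ _ (by simp)]
  obtain ⟨k, -, hk⟩ := Finset.exists_sum_fiber_le_of_maps_to_of_sum_le_nsmul
    (fun i _ => Finset.mem_univ (f i)) Finset.univ_nonempty htotal
  exact ⟨k, hk⟩

theorem exists_assignment_load_le_avg_add_max_general (S : Finset α) (hS : S.Nonempty)
    (t : α → K) (ht : 0 ≤ ∑ i ∈ S, t i) :
    ∃ f : α → ι, ∀ j : ι,
      ∑ i ∈ S with f i = j, t i ≤ (∑ i ∈ S, t i) / Fintype.card ι + S.sup' hS t := by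
  obtain ⟨f, hf⟩ := exists_machineLoad_dotProduct_self_le (ι := ι) S t
  refine ⟨f, fun j => ?_⟩
  by_cases hpos : ∃ i ∈ S, f i = j ∧ 0 < t i
  · obtain ⟨i, hi, rfl, hti⟩ := hpos
    obtain ⟨k, hk⟩ := exists_machineLoad_le_average S t f
    exact (machineLoad_le_add_of_dotProduct_self_le hf hi hti k).trans
      (add_le_add hk (Finset.le_sup' t hi))
  · push Not at hpos
    have hload : ∑ i ∈ S with f i = j, t i ≤ 0 :=
      Finset.sum_nonpos fun i hi => hpos i (Finset.mem_filter.mp hi).1 (Finset.mem_filter.mp hi).2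
    have hmax : 0 ≤ S.sup' hS t := by
      obtain ⟨i, hi, hti⟩ := Finset.exists_le_of_sum_le hS (f := 0) (g := t) (by simpa using ht)
      exact hti.trans (Finset.le_sup' t hi)
    exact hload.trans (by positivity)

end Average

/-- Graham-type upper bound: for a nonempty finite set of jobs `S` with nonnegative
processing times `t` and `m ≥ 1` machines, there exists an assignment `f : α → Fin m`
such that every machine's load is at most the average load plus the maximum job time. -/
theorem exists_assignment_load_le_avg_add_max
    {α : Type*} [DecidableEq α] (S : Finset α) (hS : S.Nonempty)
    (t : α → ℝ) (ht : ∀ i ∈ S, 0 ≤ t i) (m : ℕ) (hm : 1 ≤ m) :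
    ∃ f : α → Fin m, ∀ j : Fin m,
      ∑ i ∈ S.filter (fun i => f i = j), t i ≤ (∑ i ∈ S, t i) / m + S.sup' hS t := by
  have : Nonempty (Fin m) := Fin.pos_iff_nonempty.mp hm
  simpa using exists_assignment_load_le_avg_add_max_general (ι := Fin m) S hS t
    (Finset.sum_nonneg ht)
end

section
/- Let K be a finite set, D : K → ℝ a nonnegative function, and 𝒟 ∈ ℝ. Let G* ⊆ K satisfy Σ_{i ∈ G*} D(i) ≥ 𝒟 (feasibility), and let δ ⊆ K satisfy Σ_{i ∈ δ} D(i) ≤ 𝒟. Then 𝒟 − Σ_{i ∈ δ} D(i) ≤ Σ_{i ∈ G* \ δ} min(D(i), 𝒟 − Σ_{i' ∈ δ} D(i')). -/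
/-!
Truncation `x ↦ min x c` at a level `c ≥ 0` is subadditive on nonnegative elements. The devices of
`G* \ δ` together cover the residual requirement `R(δ)`, so truncating their total at `R(δ)` leaves
exactly `R(δ)`, and by subadditivity this is at most the sum of their truncated sizes.
-/

section Truncation

variable {M : Type*} [AddCommMonoid M] [LinearOrder M] [IsOrderedAddMonoid M]

theorem min_add_le_min_add_min_of_nonneg {x y c : M} (hx : 0 ≤ x) (hy : 0 ≤ y) (hc : 0 ≤ c) :
    min (x + y) c ≤ min x c + min y c := by
  rcases le_total c x with hcx | hxc
  · calc min (x + y) c ≤ c := min_le_right _ _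
      _ ≤ c + min y c := le_add_of_nonneg_right (le_min hy hc)
      _ = min x c + min y c := by rw [min_eq_right hcx]
  rcases le_total c y with hcy | hyc
  · calc min (x + y) c ≤ c := min_le_right _ _
      _ ≤ min x c + c := le_add_of_nonneg_left (le_min hx hc)
      _ = min x c + min y c := by rw [min_eq_right hcy]
  · calc min (x + y) c ≤ x + y := min_le_left _ _
      _ = min x c + min y c := by rw [min_eq_left hxc, min_eq_left hyc]

theorem min_sum_le_sum_min_of_nonneg {ι : Type*} {s : Finset ι} {f : ι → M} {c : M}
    (hf : ∀ i ∈ s, 0 ≤ f i) (hc : 0 ≤ c) :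
    min (∑ i ∈ s, f i) c ≤ ∑ i ∈ s, min (f i) c :=
  Finset.le_sum_of_subadditive_on_pred (fun x ↦ min x c) (fun x ↦ 0 ≤ x) (min_le_left 0 c)
    (fun _ _ hx hy ↦ min_add_le_min_add_min_of_nonneg hx hy hc) (fun _ _ ↦ add_nonneg) f hf

end Truncation

section KnapsackCover

variable {α M : Type*} [DecidableEq α] [AddCommGroup M]

theorem sum_sub_sum_le_sum_sdiff [PartialOrder M] [IsOrderedAddMonoid M] {s t : Finset α}
    {f : α → M} (hf : ∀ i ∈ t \ s, 0 ≤ f i) :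
    ∑ i ∈ s, f i - ∑ i ∈ t, f i ≤ ∑ i ∈ s \ t, f i := by
  rw [← Finset.sum_sdiff_sub_sum_sdiff]
  exact sub_le_self _ (Finset.sum_nonneg hf)

theorem knapsack_cover_valid_general [LinearOrder M] [IsOrderedAddMonoid M] {D : α → M} {𝒟 : M}
    {G δ : Finset α} (hDG : ∀ i ∈ G \ δ, 0 ≤ D i) (hDδ : ∀ i ∈ δ \ G, 0 ≤ D i)
    (hfeas : 𝒟 ≤ ∑ i ∈ G, D i) (hδD : ∑ i ∈ δ, D i ≤ 𝒟) :
    𝒟 - ∑ i ∈ δ, D i ≤ ∑ i ∈ G \ δ, min (D i) (𝒟 - ∑ i' ∈ δ, D i') := by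
  have residual_le : 𝒟 - ∑ i ∈ δ, D i ≤ ∑ i ∈ G \ δ, D i :=
    (sub_le_sub_right hfeas _).trans (sum_sub_sum_le_sum_sdiff hDδ)
  calc 𝒟 - ∑ i ∈ δ, D i
      = min (∑ i ∈ G \ δ, D i) (𝒟 - ∑ i ∈ δ, D i) := (min_eq_right residual_le).symm
    _ ≤ ∑ i ∈ G \ δ, min (D i) (𝒟 - ∑ i' ∈ δ, D i') :=
      min_sum_le_sum_min_of_nonneg hDG (sub_nonneg.mpr hδD)

end KnapsackCover

/-- Validity of the knapsack-cover inequality: if `G* ⊆ K` is feasible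
(`∑_{i ∈ G*} D i ≥ 𝒟`) and `δ ⊆ K` satisfies `∑_{i ∈ δ} D i ≤ 𝒟`, then the residual
requirement `𝒟 - D(δ)` is at most the sum of truncated sizes over `G* \ δ`. -/
theorem knapsack_cover_valid
    {α : Type*} [DecidableEq α] (K : Finset α) (D : α → ℝ)
    (hD : ∀ i ∈ K, 0 ≤ D i) (𝒟 : ℝ)
    (Gstar : Finset α) (hGK : Gstar ⊆ K) (hfeas : 𝒟 ≤ ∑ i ∈ Gstar, D i)
    (δ : Finset α) (hδK : δ ⊆ K) (hδD : ∑ i ∈ δ, D i ≤ 𝒟) :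
    𝒟 - ∑ i ∈ δ, D i ≤ ∑ i ∈ Gstar \ δ, min (D i) (𝒟 - ∑ i' ∈ δ, D i') :=
  knapsack_cover_valid_general (fun i hi ↦ hD i (hGK (Finset.sdiff_subset hi)))
    (fun i hi ↦ hD i (hδK (Finset.sdiff_subset hi))) hfeas hδD
end

section
/- Let K be a finite set, D : K → ℝ a nonnegative function, and 𝒟 ∈ ℝ. Let G' ⊆ K and i_l ∈ G' be such that Σ_{i ∈ G' \ {i_l}} D(i) < 𝒟, and let δ ⊆ G' \ {i_l}. Then Σ_{i ∈ G' \ δ} min(D(i), 𝒟 − Σ_{i' ∈ δ} D(i')) < 2·(𝒟 − Σ_{i' ∈ δ} D(i')). -/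
theorem sum_inf_le_add_sum_erase {ι M : Type*} [DecidableEq ι] [AddCommMonoid M]
    [SemilatticeInf M] [IsOrderedAddMonoid M] {s : Finset ι} {a : ι} (ha : a ∈ s)
    (f : ι → M) (c : M) :
    ∑ i ∈ s, f i ⊓ c ≤ c + ∑ i ∈ s.erase a, f i :=
  calc
    ∑ i ∈ s, f i ⊓ c = f a ⊓ c + ∑ i ∈ s.erase a, f i ⊓ c :=
      (Finset.add_sum_erase s (fun i ↦ f i ⊓ c) ha).symm
    _ ≤ c + ∑ i ∈ s.erase a, f i :=
      add_le_add inf_le_right (Finset.sum_le_sum fun _ _ ↦ inf_le_left)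

theorem truncated_sizes_lt_two_residual_general {ι M : Type*} [DecidableEq ι]
    [AddCommGroup M] [SemilatticeInf M] [IsOrderedAddMonoid M] {G δ : Finset ι} {l : ι}
    {D : ι → M} {d : M} (hl : l ∈ G) (hlt : ∑ i ∈ G.erase l, D i < d)
    (hδ : δ ⊆ G.erase l) :
    ∑ i ∈ G \ δ, D i ⊓ (d - ∑ j ∈ δ, D j) < 2 • (d - ∑ j ∈ δ, D j) := by
  have l_mem_sdiff : l ∈ G \ δ := Finset.mem_sdiff.mpr ⟨hl, (Finset.subset_erase.mp hδ).2⟩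
  have sum_rest_lt : ∑ i ∈ (G \ δ).erase l, D i < d - ∑ j ∈ δ, D j := by
    rwa [← Finset.erase_sdiff_comm, lt_sub_iff_add_lt, Finset.sum_sdiff hδ]
  calc
    ∑ i ∈ G \ δ, D i ⊓ (d - ∑ j ∈ δ, D j)
        ≤ (d - ∑ j ∈ δ, D j) + ∑ i ∈ (G \ δ).erase l, D i :=
      sum_inf_le_add_sum_erase l_mem_sdiff D _
    _ < (d - ∑ j ∈ δ, D j) + (d - ∑ j ∈ δ, D j) := by gcongr
    _ = 2 • (d - ∑ j ∈ δ, D j) := (two_nsmul _).symm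

/-- Bound on truncated sizes of the greedily selected devices: if `G' ⊆ K` with last
device `i_l ∈ G'` satisfies `∑_{i ∈ G' \ {i_l}} D i < 𝒟`, then for any
`δ ⊆ G' \ {i_l}` the sum of truncated sizes over `G' \ δ` is strictly less than twice
the residual requirement `𝒟 - D(δ)`. -/
theorem truncated_sizes_lt_two_residual
    {α : Type*} [DecidableEq α] (K : Finset α) (D : α → ℝ)
    (hD : ∀ i ∈ K, 0 ≤ D i) (𝒟 : ℝ)
    (G' : Finset α) (hG'K : G' ⊆ K) (il : α) (hil : il ∈ G')
    (hlt : ∑ i ∈ G'.erase il, D i < 𝒟)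
    (δ : Finset α) (hδ : δ ⊆ G'.erase il) :
    ∑ i ∈ G' \ δ, min (D i) (𝒟 - ∑ i' ∈ δ, D i') <
      2 * (𝒟 - ∑ i' ∈ δ, D i') := by
  simpa only [nsmul_eq_mul, Nat.cast_ofNat] using
    truncated_sizes_lt_two_residual_general hil hlt hδ
end

section
/- Let K be a finite set, D : K → ℝ a nonnegative function, 𝒟 ∈ ℝ, and ĉ : K → ℝ. Let y assign a nonnegative real y_δ to each subset δ ⊆ K, with y_δ = 0 whenever Σ_{i ∈ δ} D(i) > 𝒟. Suppose that for every i ∈ K, Σ_{δ ⊆ K, i ∉ δ} y_δ · min(D(i), 𝒟 − Σ_{i' ∈ δ} D(i')) ≤ ĉ(i) (dual feasibility). Then for every G* ⊆ K with Σ_{i ∈ G*} D(i) ≥ 𝒟, it holds that Σ_{δ ⊆ K} y_δ · (𝒟 − Σ_{i ∈ δ} D(i)) ≤ Σ_{i ∈ G*} ĉ(i). -/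
/-!
Every set `δ` with nonnegative residual requirement yields a valid knapsack-cover inequality:
a feasible `G` must cover the residual requirement with devices outside `δ`, and truncating the
sizes of these devices at the residual requirement does not spoil this. So the indicator of `G` is
feasible for the covering LP with all knapsack-cover constraints, and the claim is LP weak duality.
Sets with negative residual requirement have no such inequality, but carry no dual weight.
-/

section TruncatedSums

variable {ι M : Type*} [AddCommMonoid M] [LinearOrder M] [IsOrderedAddMonoid M]

lemma min_add_le_min_add_min {a b c : M} (ha : 0 ≤ a) (hb : 0 ≤ b) (hc : 0 ≤ c) :
    min (a + b) c ≤ min a c + min b c := by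
  rcases le_total a c with hac | hca
  · rcases le_total b c with hbc | hcb
    · rw [min_eq_left hac, min_eq_left hbc]
      exact min_le_left _ _
    · rw [min_eq_left hac, min_eq_right hcb]
      exact (min_le_right _ _).trans (le_add_of_nonneg_left ha)
  · rw [min_eq_right hca]
    exact (min_le_right _ _).trans (le_add_of_nonneg_right (le_min hb hc))

lemma min_sum_le_sum_min {s : Finset ι} {f : ι → M} {c : M} (hf : ∀ i ∈ s, 0 ≤ f i)
    (hc : 0 ≤ c) : min (∑ i ∈ s, f i) c ≤ ∑ i ∈ s, min (f i) c :=
  Finset.le_sum_of_subadditive_on_pred (fun a ↦ min a c) (0 ≤ ·) (min_le_left _ _)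
    (fun _ _ ha hb ↦ min_add_le_min_add_min ha hb hc) (fun _ _ ↦ add_nonneg) f hf

end TruncatedSums

lemma sub_sum_le_sum_sdiff_min {ι M : Type*} [DecidableEq ι] [AddCommGroup M] [LinearOrder M]
    [IsOrderedAddMonoid M] {s t : Finset ι} {f : ι → M} {c : M}
    (hf : ∀ i ∈ s ∪ t, 0 ≤ f i) (hs : c ≤ ∑ i ∈ s, f i) (ht : ∑ i ∈ t, f i ≤ c) :
    c - ∑ i ∈ t, f i ≤ ∑ i ∈ s \ t, min (f i) (c - ∑ j ∈ t, f j) := by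
  have hcover : c - ∑ i ∈ t, f i ≤ ∑ i ∈ s \ t, f i := by
    rw [sub_le_iff_le_add]
    calc
      c ≤ ∑ i ∈ s, f i := hs
      _ ≤ ∑ i ∈ s ∪ t, f i :=
        Finset.sum_le_sum_of_subset_of_nonneg Finset.subset_union_left fun i hi _ ↦ hf i hi
      _ = ∑ i ∈ s \ t, f i + ∑ i ∈ t, f i := by
        rw [← Finset.sdiff_union_self_eq_union, Finset.sum_union Finset.sdiff_disjoint]
  have hf_sdiff : ∀ i ∈ s \ t, 0 ≤ f i := fun i hi ↦
    hf i (Finset.mem_union_left t (Finset.mem_sdiff.mp hi).1)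
  calc
    c - ∑ i ∈ t, f i = min (∑ i ∈ s \ t, f i) (c - ∑ i ∈ t, f i) := (min_eq_right hcover).symm
    _ ≤ ∑ i ∈ s \ t, min (f i) (c - ∑ j ∈ t, f j) :=
      min_sum_le_sum_min hf_sdiff (sub_nonneg.mpr ht)

lemma sum_mul_le_sum_mul_of_primal_dual_feasible {ι κ R : Type*} [Semiring R] [PartialOrder R]
    [IsOrderedRing R] {s : Finset ι} {t : Finset κ} {A : κ → ι → R} {b y : κ → R} {c x : ι → R}
    (hx : ∀ i ∈ s, 0 ≤ x i) (hy : ∀ j ∈ t, 0 ≤ y j)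
    (hprimal : ∀ j ∈ t, y j ≠ 0 → b j ≤ ∑ i ∈ s, A j i * x i)
    (hdual : ∀ i ∈ s, ∑ j ∈ t, y j * A j i ≤ c i) :
    ∑ j ∈ t, y j * b j ≤ ∑ i ∈ s, c i * x i := by
  have hrow : ∀ j ∈ t, y j * b j ≤ y j * ∑ i ∈ s, A j i * x i := by
    intro j hj
    rcases eq_or_ne (y j) 0 with hyj | hyj
    · simp only [hyj, zero_mul, le_refl]
    · exact mul_le_mul_of_nonneg_left (hprimal j hj hyj) (hy j hj)
  calc
    ∑ j ∈ t, y j * b j ≤ ∑ j ∈ t, y j * ∑ i ∈ s, A j i * x i := Finset.sum_le_sum hrow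
    _ = ∑ i ∈ s, (∑ j ∈ t, y j * A j i) * x i := by
      simp only [Finset.mul_sum, Finset.sum_mul, mul_assoc]
      exact Finset.sum_comm
    _ ≤ ∑ i ∈ s, c i * x i :=
      Finset.sum_le_sum fun i hi ↦ mul_le_mul_of_nonneg_right (hdual i hi) (hx i hi)

theorem dual_weak_duality_general {α R : Type*} [DecidableEq α] [Ring R] [LinearOrder R]
    [IsOrderedRing R] {K : Finset α} {D : α → R} (hD : ∀ i ∈ K, 0 ≤ D i) {𝒟 : R} {chat : α → R}
    {y : Finset α → R} (hy : ∀ δ ∈ K.powerset, 0 ≤ y δ)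
    (hy0 : ∀ δ ∈ K.powerset, 𝒟 < ∑ i ∈ δ, D i → y δ = 0)
    (hdual : ∀ i ∈ K,
      ∑ δ ∈ K.powerset.filter (fun δ => i ∉ δ),
        y δ * min (D i) (𝒟 - ∑ i' ∈ δ, D i') ≤ chat i)
    {Gstar : Finset α} (hGK : Gstar ⊆ K) (hfeas : 𝒟 ≤ ∑ i ∈ Gstar, D i) :
    ∑ δ ∈ K.powerset, y δ * (𝒟 - ∑ i ∈ δ, D i) ≤ ∑ i ∈ Gstar, chat i := by
  let A (δ : Finset α) (i : α) : R := if i ∉ δ then min (D i) (𝒟 - ∑ j ∈ δ, D j) else 0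
  have hprimal : ∀ δ ∈ K.powerset, y δ ≠ 0 → 𝒟 - ∑ i ∈ δ, D i ≤ ∑ i ∈ Gstar, A δ i * 1 := by
    intro δ hδ hyδ
    have hδ_le : ∑ i ∈ δ, D i ≤ 𝒟 := not_lt.mp (mt (hy0 δ hδ) hyδ)
    have hunion : Gstar ∪ δ ⊆ K := Finset.union_subset hGK (Finset.mem_powerset.mp hδ)
    simpa only [A, mul_one, ← Finset.sum_filter, Finset.filter_notMem_eq_sdiff] using
      sub_sum_le_sum_sdiff_min (fun i hi ↦ hD i (hunion hi)) hfeas hδ_le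
  have hdual_matrix : ∀ i ∈ Gstar, ∑ δ ∈ K.powerset, y δ * A δ i ≤ chat i := by
    intro i hi
    simpa only [A, mul_ite, mul_zero, ← Finset.sum_filter] using hdual i (hGK hi)
  simpa only [mul_one] using
    sum_mul_le_sum_mul_of_primal_dual_feasible (fun _ _ ↦ zero_le_one) hy hprimal hdual_matrix

/-- Weak duality for the knapsack-cover LP: if `y` is a nonnegative dual solution
supported on non-covering subsets of `K` and dual-feasible with respect to the costs
`ĉ`, then `∑_δ y_δ R(δ)` lower-bounds the total cost of any feasible set `G*`. -/
theorem dual_weak_duality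
    {α : Type*} [DecidableEq α] (K : Finset α) (D : α → ℝ)
    (hD : ∀ i ∈ K, 0 ≤ D i) (𝒟 : ℝ) (chat : α → ℝ)
    (y : Finset α → ℝ)
    (hy : ∀ δ ∈ K.powerset, 0 ≤ y δ)
    (hy0 : ∀ δ ∈ K.powerset, 𝒟 < ∑ i ∈ δ, D i → y δ = 0)
    (hdual : ∀ i ∈ K,
      ∑ δ ∈ K.powerset.filter (fun δ => i ∉ δ),
        y δ * min (D i) (𝒟 - ∑ i' ∈ δ, D i') ≤ chat i)
    (Gstar : Finset α) (hGK : Gstar ⊆ K) (hfeas : 𝒟 ≤ ∑ i ∈ Gstar, D i) :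
    ∑ δ ∈ K.powerset, y δ * (𝒟 - ∑ i ∈ δ, D i) ≤ ∑ i ∈ Gstar, chat i := by
  exact dual_weak_duality_general hD hy hy0 hdual hGK hfeas
end

section
/- Let K be a finite set, D : K → ℝ a nonnegative function, 𝒟 ∈ ℝ, and let c, t : K → ℝ be nonnegative functions, α, β ≥ 0 real numbers, and m ≥ 1 a number of channels. Define ĉ(i) = α·c(i) + β·t(i)/m for i ∈ K. Let G' ⊆ K be nonempty and i_l ∈ G' satisfy Σ_{i ∈ G'} D(i) ≥ 𝒟 and Σ_{i ∈ G' \ {i_l}} D(i) < 𝒟. Let y assign a nonnegative real y_δ to each subset δ ⊆ K, with y_δ = 0 unless δ ⊆ G' \ {i_l}, such that (i) for every i ∈ G', ĉ(i) = Σ_{δ ⊆ K, i ∉ δ} y_δ · min(D(i), 𝒟 − Σ_{i' ∈ δ} D(i')), and (ii) for every i ∈ K, Σ_{δ ⊆ K, i ∉ δ} y_δ · min(D(i), 𝒟 − Σ_{i' ∈ δ} D(i')) ≤ ĉ(i). Let G* ⊆ K be nonempty with Σ_{i ∈ G*} D(i) ≥ 𝒟, and let τ* ∈ ℝ satisfy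 τ* ≥ (Σ_{i ∈ G*} t(i))/m and τ* ≥ max_{i ∈ G'} t(i). Then α·Σ_{i ∈ G'} c(i) + β·((Σ_{i ∈ G'} t(i))/m + max_{i ∈ G'} t(i)) ≤ 3·(α·Σ_{i ∈ G*} c(i) + β·τ*). -/
/-!
The duals `y` pay for `G'` through tight constraints, so after exchanging sums it suffices to
compare, for each `δ` with `y δ ≠ 0`, the truncated sizes collected by `G'` and by `G*` outside `δ`.
Every feasible set collects at least `R(δ)`, the knapsack-cover inequality. The set `G'` collects
at most `2 R(δ)`: its last device contributes at most `R(δ)` by truncation, and its other devices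
contribute at most `R(δ)` because without the last one `G'` still falls short of `𝒟`.
Hence the modified cost of `G'` is at most twice that of `G*`; the third copy of the optimal cost
absorbs the longest upload in the Graham bound.
-/

namespace KnapsackCover

variable {ι : Type*}

section Data

variable {M : Type*} [AddCommGroup M]

/-- The demand `R(δ) = 𝒟 - D(δ)` left over once all the devices of `δ` are selected. -/
def residualDemand (D : ι → M) (𝒟 : M) (δ : Finset ι) : M :=
  𝒟 - ∑ i ∈ δ, D i

/-- The useful data `s^δ(i) = min (D(i), R(δ))` of device `i` once `δ` is selected; replacing
`D i` by this quantity is what makes the relaxed covering constraints strong. -/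
def truncatedSize [LinearOrder M] (D : ι → M) (𝒟 : M) (δ : Finset ι) (i : ι) : M :=
  min (D i) (residualDemand D 𝒟 δ)

variable [LinearOrder M] [IsOrderedAddMonoid M] {D : ι → M} {𝒟 : M} {G H δ : Finset ι} {l : ι}

theorem residualDemand_nonneg (hD : ∀ i ∈ G, 0 ≤ D i) (hG : ∑ i ∈ G, D i ≤ 𝒟) (hδ : δ ⊆ G) :
    0 ≤ residualDemand D 𝒟 δ :=
  sub_nonneg.2 <| (Finset.sum_le_sum_of_subset_of_nonneg hδ fun i hi _ => hD i hi).trans hG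

variable [DecidableEq ι]

theorem residualDemand_le_sum_sdiff (hD : ∀ i ∈ δ, 0 ≤ D i) (hH : 𝒟 ≤ ∑ i ∈ H, D i) :
    residualDemand D 𝒟 δ ≤ ∑ i ∈ H \ δ, D i :=
  calc 𝒟 - ∑ i ∈ δ, D i
    _ ≤ ∑ i ∈ H, D i - ∑ i ∈ δ, D i := sub_le_sub_right hH _
    _ = ∑ i ∈ H \ δ, D i - ∑ i ∈ δ \ H, D i := Finset.sum_sdiff_sub_sum_sdiff.symm
    _ ≤ ∑ i ∈ H \ δ, D i :=
      sub_le_self _ <| Finset.sum_nonneg fun i hi => hD i (Finset.mem_sdiff.1 hi).1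

theorem residualDemand_le_sum_truncatedSize (hDδ : ∀ i ∈ δ, 0 ≤ D i) (hDH : ∀ i ∈ H, 0 ≤ D i)
    (hR : 0 ≤ residualDemand D 𝒟 δ) (hH : 𝒟 ≤ ∑ i ∈ H, D i) :
    residualDemand D 𝒟 δ ≤ ∑ i ∈ H \ δ, truncatedSize D 𝒟 δ i := by
  by_cases hlarge : ∃ i ∈ H \ δ, residualDemand D 𝒟 δ ≤ D i
  · obtain ⟨i, hi, hRi⟩ := hlarge
    have hnonneg : ∀ j ∈ H \ δ, 0 ≤ truncatedSize D 𝒟 δ j := fun j hj =>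
      le_min (hDH j (Finset.mem_sdiff.1 hj).1) hR
    calc residualDemand D 𝒟 δ
      _ = truncatedSize D 𝒟 δ i := (min_eq_right hRi).symm
      _ ≤ ∑ j ∈ H \ δ, truncatedSize D 𝒟 δ j := Finset.single_le_sum hnonneg hi
  · push Not at hlarge
    calc residualDemand D 𝒟 δ
      _ ≤ ∑ i ∈ H \ δ, D i := residualDemand_le_sum_sdiff hDδ hH
      _ = ∑ i ∈ H \ δ, truncatedSize D 𝒟 δ i :=
        Finset.sum_congr rfl fun i hi => (min_eq_left (hlarge i hi).le).symm

theorem sum_truncatedSize_le_two_nsmul_residualDemand (hl : l ∈ G)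
    (hG : ∑ i ∈ G.erase l, D i ≤ 𝒟) (hδ : δ ⊆ G.erase l) :
    ∑ i ∈ G \ δ, truncatedSize D 𝒟 δ i ≤ 2 • residualDemand D 𝒟 δ := by
  have hlδ : l ∈ G \ δ := Finset.mem_sdiff.2 ⟨hl, fun h => Finset.notMem_erase l G (hδ h)⟩
  have hlast : truncatedSize D 𝒟 δ l ≤ residualDemand D 𝒟 δ := min_le_right _ _
  have hrest : ∑ i ∈ G.erase l \ δ, truncatedSize D 𝒟 δ i ≤ residualDemand D 𝒟 δ :=
    calc ∑ i ∈ G.erase l \ δ, truncatedSize D 𝒟 δ i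
      _ ≤ ∑ i ∈ G.erase l \ δ, D i := Finset.sum_le_sum fun i _ => min_le_left _ _
      _ = ∑ i ∈ G.erase l, D i - ∑ i ∈ δ, D i := Finset.sum_sdiff_eq_sub hδ
      _ ≤ residualDemand D 𝒟 δ := sub_le_sub_right hG _
  rw [← Finset.add_sum_erase _ _ hlδ, ← Finset.erase_sdiff_comm, two_nsmul]
  exact add_le_add hlast hrest

end Data

section Duality

variable [DecidableEq ι] {A : Type*} [CommRing A] [LinearOrder A]

/-- The left-hand side `∑ y δ * s^δ(i)`, over `δ ⊆ K` with `i ∉ δ`, of the constraint of device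
`i` in the dual of the knapsack-cover relaxation. -/
def dualLoad (K : Finset ι) (D : ι → A) (𝒟 : A) (y : Finset ι → A) (i : ι) : A :=
  ∑ δ ∈ K.powerset with i ∉ δ, y δ * truncatedSize D 𝒟 δ i

theorem sum_dualLoad (K : Finset ι) (D : ι → A) (𝒟 : A) (y : Finset ι → A) (G : Finset ι) :
    ∑ i ∈ G, dualLoad K D 𝒟 y i =
      ∑ δ ∈ K.powerset, y δ * ∑ i ∈ G \ δ, truncatedSize D 𝒟 δ i := by
  simp_rw [dualLoad, Finset.mul_sum]
  refine Finset.sum_comm' fun i δ => ?_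
  simp only [Finset.mem_filter, Finset.mem_sdiff]
  tauto

variable [IsStrictOrderedRing A] {K G H : Finset ι} {D : ι → A} {𝒟 : A} {y : Finset ι → A} {l : ι}

theorem sum_dualLoad_le_two_mul (hD : ∀ i ∈ K, 0 ≤ D i) (hGK : G ⊆ K) (hl : l ∈ G)
    (hG : ∑ i ∈ G.erase l, D i ≤ 𝒟) (hHK : H ⊆ K) (hH : 𝒟 ≤ ∑ i ∈ H, D i)
    (hy : ∀ δ ⊆ K, 0 ≤ y δ) (hsupp : ∀ δ ⊆ K, ¬ δ ⊆ G.erase l → y δ = 0) :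
    ∑ i ∈ G, dualLoad K D 𝒟 y i ≤ 2 * ∑ i ∈ H, dualLoad K D 𝒟 y i := by
  simp only [sum_dualLoad, Finset.mul_sum _ _ (2 : A)]
  refine Finset.sum_le_sum fun δ hδ => ?_
  have hδK : δ ⊆ K := Finset.mem_powerset.1 hδ
  by_cases hδG : δ ⊆ G.erase l
  · have hR : 0 ≤ residualDemand D 𝒟 δ :=
      residualDemand_nonneg (fun i hi => hD i (hGK (Finset.mem_of_mem_erase hi))) hG hδG
    have hupper : ∑ i ∈ G \ δ, truncatedSize D 𝒟 δ i ≤ 2 * residualDemand D 𝒟 δ := by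
      simpa only [nsmul_eq_mul, Nat.cast_ofNat] using
        sum_truncatedSize_le_two_nsmul_residualDemand hl hG hδG
    have hlower : residualDemand D 𝒟 δ ≤ ∑ i ∈ H \ δ, truncatedSize D 𝒟 δ i :=
      residualDemand_le_sum_truncatedSize (fun i hi => hD i (hδK hi))
        (fun i hi => hD i (hHK hi)) hR hH
    calc y δ * ∑ i ∈ G \ δ, truncatedSize D 𝒟 δ i
      _ ≤ y δ * (2 * ∑ i ∈ H \ δ, truncatedSize D 𝒟 δ i) :=
        mul_le_mul_of_nonneg_left (by linarith) (hy δ hδK)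
      _ = 2 * (y δ * ∑ i ∈ H \ δ, truncatedSize D 𝒟 δ i) := mul_left_comm _ _ _
  · simp only [hsupp δ hδK hδG, zero_mul, mul_zero, le_refl]

theorem sum_cost_le_two_mul {cost : ι → A} (hD : ∀ i ∈ K, 0 ≤ D i) (hGK : G ⊆ K) (hl : l ∈ G)
    (hG : ∑ i ∈ G.erase l, D i ≤ 𝒟) (hHK : H ⊆ K) (hH : 𝒟 ≤ ∑ i ∈ H, D i)
    (hy : ∀ δ ⊆ K, 0 ≤ y δ) (hsupp : ∀ δ ⊆ K, ¬ δ ⊆ G.erase l → y δ = 0)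
    (htight : ∀ i ∈ G, cost i = dualLoad K D 𝒟 y i)
    (hdual : ∀ i ∈ H, dualLoad K D 𝒟 y i ≤ cost i) :
    ∑ i ∈ G, cost i ≤ 2 * ∑ i ∈ H, cost i :=
  calc ∑ i ∈ G, cost i
    _ = ∑ i ∈ G, dualLoad K D 𝒟 y i := Finset.sum_congr rfl htight
    _ ≤ 2 * ∑ i ∈ H, dualLoad K D 𝒟 y i := sum_dualLoad_le_two_mul hD hGK hl hG hHK hH hy hsupp
    _ ≤ 2 * ∑ i ∈ H, cost i := mul_le_mul_of_nonneg_left (Finset.sum_le_sum hdual) zero_le_two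

end Duality

end KnapsackCover

open KnapsackCover in
/-- Here `w i` stands for the share `t i / m` of device `i` in the average load, and `T` for the
longest upload time in `G'`. -/
theorem orcoDCS_three_approx_first_case_general
    {ι A : Type*} [DecidableEq ι] [CommRing A] [LinearOrder A] [IsStrictOrderedRing A]
    {K : Finset ι} {D : ι → A} (hD : ∀ i ∈ K, 0 ≤ D i) {𝒟 : A}
    {c w : ι → A} (hc : ∀ i ∈ K, 0 ≤ c i) {a b : A} (ha : 0 ≤ a) (hb : 0 ≤ b)
    {chat : ι → A} (hchat : ∀ i, chat i = a * c i + b * w i)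
    {G' : Finset ι} (hG'K : G' ⊆ K) {il : ι} (hil : il ∈ G') (hG' : ∑ i ∈ G'.erase il, D i ≤ 𝒟)
    {y : Finset ι → A} (hy : ∀ δ ⊆ K, 0 ≤ y δ) (hsupp : ∀ δ ⊆ K, ¬ δ ⊆ G'.erase il → y δ = 0)
    (htight : ∀ i ∈ G', chat i = dualLoad K D 𝒟 y i)
    (hdual : ∀ i ∈ K, dualLoad K D 𝒟 y i ≤ chat i)
    {Gstar : Finset ι} (hGK : Gstar ⊆ K) (hfeas : 𝒟 ≤ ∑ i ∈ Gstar, D i)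
    {T τstar : A} (hload : ∑ i ∈ Gstar, w i ≤ τstar) (hT : T ≤ τstar) :
    a * ∑ i ∈ G', c i + b * (∑ i ∈ G', w i + T) ≤ 3 * (a * ∑ i ∈ Gstar, c i + b * τstar) := by
  have hsum (G : Finset ι) : ∑ i ∈ G, chat i = a * ∑ i ∈ G, c i + b * ∑ i ∈ G, w i := by
    simp only [hchat, Finset.sum_add_distrib, Finset.mul_sum]
  have hcost := sum_cost_le_two_mul hD hG'K hil hG' hGK hfeas hy hsupp htight
    fun i hi => hdual i (hGK hi)
  rw [hsum, hsum] at hcost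
  have hcstar : 0 ≤ a * ∑ i ∈ Gstar, c i :=
    mul_nonneg ha (Finset.sum_nonneg fun i hi => hc i (hGK hi))
  calc a * ∑ i ∈ G', c i + b * (∑ i ∈ G', w i + T)
    _ = (a * ∑ i ∈ G', c i + b * ∑ i ∈ G', w i) + b * T := by ring
    _ ≤ 2 * (a * ∑ i ∈ Gstar, c i + b * ∑ i ∈ Gstar, w i) + b * T := by gcongr
    _ ≤ 2 * (a * ∑ i ∈ Gstar, c i + b * τstar) + b * τstar := by gcongr
    _ ≤ 3 * (a * ∑ i ∈ Gstar, c i + b * τstar) := by linarith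


/-- First case of Theorem 1: with modified costs `ĉ(i) = α c(i) + β t(i)/m`, a greedily
selected feasible set `G'` (with last device `i_l` and duals `y`), and an optimal
feasible set `G*` whose upload completion time `τ*` is at least both the average load
of `G*` and the maximum upload time in `G'`, the training cost of `G'`, bounded via the
Graham scheduling bound, is at most 3 times the optimal training cost. -/
theorem orcoDCS_three_approx_first_case
    {ι : Type*} [DecidableEq ι] (K : Finset ι) (D : ι → ℝ)
    (hD : ∀ i ∈ K, 0 ≤ D i) (𝒟 : ℝ)
    (c t : ι → ℝ) (hc : ∀ i ∈ K, 0 ≤ c i) (ht : ∀ i ∈ K, 0 ≤ t i)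
    (a b : ℝ) (ha : 0 ≤ a) (hb : 0 ≤ b)
    (m : ℕ) (hm : 1 ≤ m)
    (chat : ι → ℝ) (hchat : ∀ i, chat i = a * c i + b * t i / m)
    (G' : Finset ι) (hG'ne : G'.Nonempty) (hG'K : G' ⊆ K)
    (il : ι) (hil : il ∈ G')
    (hfeasG' : 𝒟 ≤ ∑ i ∈ G', D i) (hlt : ∑ i ∈ G'.erase il, D i < 𝒟)
    (y : Finset ι → ℝ)
    (hy : ∀ δ ∈ K.powerset, 0 ≤ y δ)
    (hsupp : ∀ δ ∈ K.powerset, ¬ δ ⊆ G'.erase il → y δ = 0)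
    (htight : ∀ i ∈ G',
      chat i = ∑ δ ∈ K.powerset.filter (fun δ => i ∉ δ),
        y δ * min (D i) (𝒟 - ∑ i' ∈ δ, D i'))
    (hdual : ∀ i ∈ K,
      ∑ δ ∈ K.powerset.filter (fun δ => i ∉ δ),
        y δ * min (D i) (𝒟 - ∑ i' ∈ δ, D i') ≤ chat i)
    (Gstar : Finset ι) (hGne : Gstar.Nonempty) (hGK : Gstar ⊆ K)
    (hfeas : 𝒟 ≤ ∑ i ∈ Gstar, D i)
    (τstar : ℝ)
    (hτ1 : (∑ i ∈ Gstar, t i) / m ≤ τstar)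
    (hτ2 : G'.sup' hG'ne t ≤ τstar) :
    a * ∑ i ∈ G', c i + b * ((∑ i ∈ G', t i) / m + G'.sup' hG'ne t) ≤
      3 * (a * ∑ i ∈ Gstar, c i + b * τstar) := by
  simp only [Finset.mem_powerset] at hy hsupp
  rw [Finset.sum_div] at hτ1 ⊢
  exact orcoDCS_three_approx_first_case_general (chat := chat) hD hc ha hb
    (fun i => by rw [hchat, mul_div_assoc]) hG'K hil hlt.le hy hsupp htight hdual hGK hfeas hτ1 hτ2
end
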